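/- For all real x, Σ_{k∈ℤ} 1/(1 + (x − k)²) = π·sinh(2π)/(cosh(2π) − cos(2πx)), and consequently this sum is at most π·coth(π) for every real x. -/

import Mathlib

/-!
Taking imaginary parts at `z = x + b i` in the Mittag-Leffler expansion
`π cot (π z) = 1 / z + ∑_{n ≥ 1} (1 / (z - n) + 1 / (z + n))` turns each `1 / (z - k)` into
`-b / (b ^ 2 + (x - k) ^ 2)`. These decay quadratically, so the paired sum becomes an absolutely
convergent sum over `ℤ`. Since `cos (2 π x) ≤ 1`, the closed form is largest at integers `x`.
-/

open scoped Real ComplexConjugate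

lemma normSq_sin (z : ℂ) :
    Complex.normSq (Complex.sin z) = (Real.cosh (2 * z.im) - Real.cos (2 * z.re)) / 2 := by
  have cosh_eq : (Real.cosh (2 * z.im) : ℂ) = Complex.cos (z - conj z) := by
    rw [Complex.sub_conj, Complex.cos_mul_I, Complex.ofReal_cosh]
  have cos_eq : (Real.cos (2 * z.re) : ℂ) = Complex.cos (z + conj z) := by
    rw [Complex.add_conj, Complex.ofReal_cos]
  apply Complex.ofReal_injective
  rw [Complex.normSq_eq_conj_mul_self, ← Complex.sin_conj, Complex.ofReal_div,
    Complex.ofReal_sub, cosh_eq, cos_eq, Complex.cos_sub, Complex.cos_add, Complex.ofReal_ofNat]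
  ring

lemma cos_mul_conj_sin (z : ℂ) :
    Complex.cos z * conj (Complex.sin z) =
      ⟨Real.sin (2 * z.re) / 2, -Real.sinh (2 * z.im) / 2⟩ := by
  have sin_eq : (Real.sin (2 * z.re) : ℂ) = Complex.sin (z + conj z) := by
    rw [Complex.add_conj, Complex.ofReal_sin]
  have sinh_eq : (Real.sinh (2 * z.im) : ℂ) * Complex.I = Complex.sin (z - conj z) := by
    rw [Complex.sub_conj, Complex.sin_mul_I, Complex.ofReal_sinh]
  rw [Complex.mk_eq_add_mul_I, ← Complex.sin_conj]
  simp only [Complex.ofReal_div, Complex.ofReal_neg, Complex.ofReal_ofNat]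
  rw [neg_div, neg_mul, div_mul_eq_mul_div, sin_eq, sinh_eq, Complex.sin_add, Complex.sin_sub]
  ring

-- At the poles of `cot` both sides vanish, since `x / 0 = 0`.
lemma im_cot (z : ℂ) :
    (Complex.cot z).im =
      -(Real.sinh (2 * z.im) / (Real.cosh (2 * z.im) - Real.cos (2 * z.re))) := by
  rw [Complex.cot, div_eq_mul_inv, Complex.inv_def, ← mul_assoc, Complex.im_mul_ofReal,
    cos_mul_conj_sin, normSq_sin, inv_div, neg_div, neg_mul, div_mul_div_cancel₀ two_ne_zero]

lemma summable_inv_normSq_sub_intCast (z : ℂ) :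
    Summable fun k : ℤ ↦ (Complex.normSq (z - k))⁻¹ := by
  refine (EisensteinSeries.linear_right_summable (-z) 1 le_rfl).norm.congr fun k ↦ ?_
  rw [Int.cast_one, one_mul, neg_add_eq_sub, norm_inv, norm_zpow, norm_sub_rev,
    Complex.normSq_eq_norm_sq, zpow_ofNat]

lemma hasSum_im_inv_sub_intCast {z : ℂ} (hz : z ∈ Complex.integerComplement) :
    HasSum (fun k : ℤ ↦ ((z - k)⁻¹).im) (π * Complex.cot (π * z)).im := by
  set f : ℤ → ℝ := fun k ↦ ((z - k)⁻¹).im with hf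
  have f_zero : f 0 = (1 / z).im := by simp [hf]
  have summable_f : Summable f := by
    refine ((summable_inv_normSq_sub_intCast z).mul_left (-z.im)).congr fun k ↦ ?_
    simp [hf, Complex.inv_im, div_eq_mul_inv]
  have paired_eq_cot : HasSum (fun n : ℕ ↦ f ↑(n + 1) + f (-↑(n + 1)))
      (π * Complex.cot (π * z) - 1 / z).im := by
    rw [cot_series_rep' hz]
    refine (Complex.hasSum_im (summable_cotTerm hz).hasSum).congr_fun fun n ↦ ?_
    simp [hf, cotTerm, sub_eq_add_neg, add_comm]
  have paired_eq_tsum :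
      HasSum (fun n : ℕ ↦ f ↑(n + 1) + f (-↑(n + 1))) (∑' k, f k - f 0) := by
    have := (hasSum_nat_add_iff' 1).mpr summable_f.hasSum.nat_add_neg
    simpa using this
  have tsum_eq : ∑' k, f k = (π * Complex.cot (π * z)).im := by
    have := paired_eq_tsum.unique paired_eq_cot
    rwa [Complex.sub_im, f_zero, sub_left_inj] at this
  exact tsum_eq ▸ summable_f.hasSum

lemma hasSum_div_sq_add_sub_intCast_sq {b : ℝ} (hb : b ≠ 0) (x : ℝ) :
    HasSum (fun k : ℤ ↦ b / (b ^ 2 + (x - k) ^ 2))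
      (π * Real.sinh (2 * π * b) / (Real.cosh (2 * π * b) - Real.cos (2 * π * x))) := by
  have hz : (x + b * Complex.I : ℂ) ∈ Complex.integerComplement := by
    rintro ⟨n, hn⟩
    exact hb (by simpa using (congrArg Complex.im hn).symm)
  have term_eq (k : ℤ) :
      -((x + b * Complex.I - k : ℂ)⁻¹).im = b / (b ^ 2 + (x - k) ^ 2) := by
    have sub_eq : (x + b * Complex.I - k : ℂ) = (x - k : ℝ) + b * Complex.I := by
      push_cast
      ring
    rw [sub_eq, Complex.inv_im, Complex.normSq_add_mul_I, add_comm (b ^ 2)]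
    simp [neg_div]
  have sum_eq : -(π * Complex.cot (π * (x + b * Complex.I))).im =
      π * Real.sinh (2 * π * b) / (Real.cosh (2 * π * b) - Real.cos (2 * π * x)) := by
    rw [Complex.im_ofReal_mul, im_cot]
    simp [mul_assoc, mul_div_assoc]
  simpa only [term_eq, sum_eq] using (hasSum_im_inv_sub_intCast hz).neg

lemma sinh_two_mul_div_cosh_two_mul_sub_one (t : ℝ) :
    Real.sinh (2 * t) / (Real.cosh (2 * t) - 1) = Real.cosh t / Real.sinh t := by
  have cosh_sub_one : Real.cosh (2 * t) - 1 = 2 * Real.sinh t ^ 2 := by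
    rw [Real.cosh_two_mul, Real.cosh_sq]
    ring
  rw [Real.sinh_two_mul, cosh_sub_one]
  field_simp

lemma sinh_two_mul_div_cosh_two_mul_sub_cos_le {t : ℝ} (ht : 0 < t) (θ : ℝ) :
    Real.sinh (2 * t) / (Real.cosh (2 * t) - Real.cos θ) ≤ Real.cosh t / Real.sinh t := by
  rw [← sinh_two_mul_div_cosh_two_mul_sub_one]
  have one_lt_cosh : 1 < Real.cosh (2 * t) := Real.one_lt_cosh.mpr (by positivity)
  have cos_le_one : Real.cos θ ≤ 1 := Real.cos_le_one θ
  gcongr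

theorem stmt9_general {b : ℝ} (hb : 0 < b) (x : ℝ) :
    HasSum (fun k : ℤ ↦ b / (b ^ 2 + (x - k) ^ 2))
      (π * Real.sinh (2 * π * b) / (Real.cosh (2 * π * b) - Real.cos (2 * π * x))) ∧
    ∑' k : ℤ, b / (b ^ 2 + (x - k) ^ 2) ≤ π * (Real.cosh (π * b) / Real.sinh (π * b)) := by
  have closed_form := hasSum_div_sq_add_sub_intCast_sq hb.ne' x
  refine ⟨closed_form, ?_⟩
  rw [closed_form.tsum_eq, mul_div_assoc, mul_assoc 2 π b]
  refine mul_le_mul_of_nonneg_left ?_ Real.pi_nonneg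
  exact sinh_two_mul_div_cosh_two_mul_sub_cos_le (by positivity) _

theorem stmt9 (x : ℝ) :
    (∑' k : ℤ, 1 / (1 + (x - (k : ℝ)) ^ 2)) =
      Real.pi * Real.sinh (2 * Real.pi) /
        (Real.cosh (2 * Real.pi) - Real.cos (2 * Real.pi * x)) ∧
    (∑' k : ℤ, 1 / (1 + (x - (k : ℝ)) ^ 2)) ≤
      Real.pi * (Real.cosh Real.pi / Real.sinh Real.pi) := by
  obtain ⟨closed_form, bound⟩ := stmt9_general one_pos x
  exact ⟨by simpa using closed_form.tsum_eq, by simpa using bound⟩
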